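/- Let n = 55 and let x, y ∈ S_55 be the permutations given in the context, with z = (x·y)⁻¹. Then (x, y, z) is a nice triple; the cycle types of x, y, z are 4^13, 2^25 and 6^8·3^1·2^2 respectively; and the subgroup ⟨x, y⟩ of S_55 has cardinality 1320 (the order of PGL(2,11)). -/

import Mathlib

/-- `permInd s` = (sum of the cycle type of `s`) − (number of entries of the cycle type of `s`),
i.e. `n` minus the number of cycles of `s` when fixed points are counted as cycles. -/
def permInd {n : ℕ} (s : Equiv.Perm (Fin n)) : ℕ :=
  s.cycleType.sum - Multiset.card s.cycleType

/-- A `MulAction` is preprimitive if it is pretransitive and every block is trivial. -/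
def IsPreprimitive (G : Type*) (X : Type*) [Group G] [MulAction G X] : Prop :=
  MulAction.IsPretransitive G X ∧
    ∀ B : Set X, MulAction.IsBlock G B → MulAction.IsTrivialBlock B

/-- A triple `(x, y, z)` of permutations in `S_n` is *nice*:
(i) `x * y * z = 1`; (ii) `G = ⟨x, y⟩` is neither the alternating nor the symmetric group;
(iii) `G` acts primitively on `Fin n` and is almost simple; (iv) the triple has genus 0;
(v) the triple is rigid in `G`; (vi) `x`, `y`, `z` lie in rational conjugacy classes of `G`. -/
def IsNice {n : ℕ} (x y z : Equiv.Perm (Fin n)) : Prop :=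
  x * y * z = 1 ∧
  (Subgroup.closure {x, y} ≠ alternatingGroup (Fin n) ∧
    Subgroup.closure {x, y} ≠ ⊤) ∧
  IsPreprimitive (Subgroup.closure {x, y}) (Fin n) ∧
  (∃ S : Subgroup (Subgroup.closure {x, y}), S.Normal ∧ IsSimpleGroup S ∧
    (∃ a b : S, a * b ≠ b * a) ∧
    Subgroup.centralizer (S : Set (Subgroup.closure {x, y})) = ⊥) ∧
  permInd x + permInd y + permInd z = 2 * (n - 1) ∧
  (∀ x' y' z' : Equiv.Perm (Fin n),
    x' * y' * z' = 1 →
    Subgroup.closure {x', y'} = Subgroup.closure {x, y} →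
    (∃ g ∈ Subgroup.closure {x, y}, g * x * g⁻¹ = x') →
    (∃ g ∈ Subgroup.closure {x, y}, g * y * g⁻¹ = y') →
    (∃ g ∈ Subgroup.closure {x, y}, g * z * g⁻¹ = z') →
    ∃ g ∈ Subgroup.closure {x, y},
      g * x * g⁻¹ = x' ∧ g * y * g⁻¹ = y' ∧ g * z * g⁻¹ = z') ∧
  ∀ g ∈ ({x, y, z} : Set (Equiv.Perm (Fin n))), ∀ k : ℤ,
    Int.gcd k (orderOf g) = 1 →
    ∃ h ∈ Subgroup.closure {x, y}, h * g * h⁻¹ = g ^ k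

/-- The permutation given by a list of (disjoint) cycles, each written as a list of points. -/
def permOfCycles {n : ℕ} (cs : List (List (Fin n))) : Equiv.Perm (Fin n) :=
  (cs.map List.formPerm).prod

def x : Equiv.Perm (Fin 55) := permOfCycles [
  [2, 54, 55, 3],
  [4, 42, 33, 47],
  [5, 46, 48, 41],
  [6, 27, 49, 50],
  [7, 17, 38, 26],
  [8, 37, 36, 22],
  [9, 30, 32, 51],
  [10, 21, 19, 35],
  [11, 44, 39, 20],
  [12, 45, 31, 34],
  [13, 52, 40, 53],
  [14, 23, 29, 28],
  [15, 16, 18, 25]]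

def y : Equiv.Perm (Fin 55) := permOfCycles [
  [1, 22],
  [2, 34],
  [3, 41],
  [4, 39],
  [5, 50],
  [6, 52],
  [8, 42],
  [9, 54],
  [10, 27],
  [11, 23],
  [12, 24],
  [14, 44],
  [15, 49],
  [16, 33],
  [17, 35],
  [18, 37],
  [19, 32],
  [21, 40],
  [25, 46],
  [26, 47],
  [28, 48],
  [29, 45],
  [31, 38],
  [43, 53],
  [51, 55]]

/-!
The permutations `x` and `y` generate the group `PGL(2, 11)` in its action on the `55` cosets of a
subgroup `S₄`, the normalizer of a Klein four-group; they are the images of the classes of two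
matrices. The affine maps `t ↦ a * t + b` with square slope `a` form a complement of this `S₄`, so
they label the points.

* Almost simplicity and faithfulness of the action come from the simplicity of `PSL(2, 11)` and its
  trivial centralizer.
* Primitivity is maximality of the `S₄`: a larger subgroup contains two affine maps that do not
  commute, their commutator is a translation, and a translation together with `S₄` generates
  `PGL(2, 11)`.
* Rigidity: an element of `PGL(2, 11)` has trace and determinant up to scaling as conjugacy
  invariants. Once the first entry is fixed, they leave the second entry so little freedom that the
  centralizer of the first entry is transitive on the possibilities.
* Rationality: every element of `PGL(2, F)` is conjugate to its inverse, and the orders `4`, `2`,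
  `6` of the entries admit no generators of a cyclic group other than `g` and `g⁻¹`.
-/

open Equiv (Perm)

namespace NiceTriple

section Group

variable {G H : Type*} [Group G] [Group H]

/-- A group is almost simple if it has a nonabelian simple normal subgroup with trivial
centralizer; this is the form in which `IsNice` asks for it. -/
def IsAlmostSimple (G : Type*) [Group G] : Prop :=
  ∃ S : Subgroup G, S.Normal ∧ IsSimpleGroup S ∧ (∃ a b : S, a * b ≠ b * a) ∧
    Subgroup.centralizer (S : Set G) = ⊥

/-- The pair `(a, b)`, standing for the triple `(a, b, (a * b)⁻¹)`, is rigid if every pair with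
the same conjugacy classes of entries and of product is simultaneously conjugate to it. This is
stronger than rigidity in the usual sense, where only generating pairs are considered. -/
def IsRigid (a b : G) : Prop :=
  ∀ a' b' : G, IsConj a a' → IsConj b b' → IsConj (a * b) (a' * b') →
    ∃ g : G, g * a * g⁻¹ = a' ∧ g * b * g⁻¹ = b'

/-- An element is rational if it is conjugate to each of its powers that generates the same
cyclic group. -/
def IsRational (g : G) : Prop :=
  ∀ k : ℤ, Int.gcd k (orderOf g) = 1 → IsConj g (g ^ k)

theorem IsAlmostSimple.of_mulEquiv (e : G ≃* H) (hG : IsAlmostSimple G) : IsAlmostSimple H := by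
  obtain ⟨S, hnormal, hsimple, ⟨a, b, hab⟩, hcent⟩ := hG
  let eS : S ≃* S.map e.toMonoidHom := e.subgroupMap S
  refine ⟨S.map e.toMonoidHom, hnormal.map _ e.surjective, ?_, ⟨eS a, eS b, ?_⟩, ?_⟩
  · exact eS.isSimpleGroup_congr.1 hsimple
  · simpa only [← map_mul, ne_eq, eS.injective.eq_iff] using hab
  · refine (Subgroup.eq_bot_iff_forall _).2 fun h hh => ?_
    have hpre : e.symm h ∈ Subgroup.centralizer (S : Set G) := fun s hs => by
      apply e.injective
      simpa using hh (e s) ⟨s, hs, rfl⟩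
    rw [hcent, Subgroup.mem_bot] at hpre
    simpa using hpre

theorem injective_of_not_le_ker {S : Subgroup G} [S.Normal] [IsSimpleGroup S]
    (hcent : Subgroup.centralizer (S : Set G) = ⊥) {f : G →* H} (hS : ¬ S ≤ f.ker) :
    Function.Injective f := by
  have hdisj : Disjoint f.ker S := by
    have hnormal : (f.ker.subgroupOf S).Normal := inferInstance
    rcases hnormal.eq_bot_or_eq_top with h | h
    · exact Subgroup.subgroupOf_eq_bot.1 h
    · exact absurd (Subgroup.subgroupOf_eq_top.1 h) hS
  rw [← MonoidHom.ker_eq_bot_iff, eq_bot_iff, ← hcent]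
  exact fun g hg s hs =>
    (Subgroup.commute_of_normal_of_disjoint _ _ inferInstance inferInstance hdisj g s hg hs).eq.symm

theorem isRational_of_isConj_inv {g : G} (hunits : ∀ u : (ZMod (orderOf g))ˣ, u = 1 ∨ u = -1)
    (hg : IsConj g g⁻¹) : IsRational g := by
  intro k hk
  have hcoprime : IsCoprime k (orderOf g : ℤ) := Int.isCoprime_iff_gcd_eq_one.2 hk
  have hk' : (k : ZMod (orderOf g)) = 1 ∨ (k : ZMod (orderOf g)) = -1 := by
    obtain ⟨u, hu⟩ := (ZMod.coe_int_isUnit_iff_isCoprime k _).2 hcoprime.symm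
    rw [← hu]
    exact (hunits u).imp (fun h => by rw [h, Units.val_one])
      (fun h => by rw [h, Units.val_neg, Units.val_one])
  have hpow (m : ℤ) (h : (k : ZMod (orderOf g)) = m) : g ^ k = g ^ m :=
    zpow_eq_zpow_iff_modEq.2 ((ZMod.intCast_eq_intCast_iff _ _ _).1 h)
  rcases hk' with h | h
  · rw [hpow 1 (by simpa using h), zpow_one]
  · rwa [hpow (-1) (by simpa using h), zpow_neg_one]

theorem IsRational.inv {g : G} (hg : IsRational g) : IsRational g⁻¹ := by
  intro k hk
  rw [orderOf_inv] at hk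
  obtain ⟨h, hh⟩ := isConj_iff.1 (hg k hk)
  exact isConj_iff.2 ⟨h, by rw [inv_zpow, ← hh]; group⟩

theorem isRigid_of_forall_exists_commute {a b : G}
    (h : ∀ b', IsConj b b' → IsConj (a * b) (a * b') → ∃ g, g * a = a * g ∧ g * b = b' * g) :
    IsRigid a b := by
  intro a' b' ha hb hab
  obtain ⟨u, rfl⟩ := isConj_iff.1 ha
  have hconj (g : G) : IsConj g (u⁻¹ * g * u) := isConj_iff.2 ⟨u⁻¹, by rw [inv_inv]⟩
  have hprod : u⁻¹ * (u * a * u⁻¹ * b') * u = a * (u⁻¹ * b' * u) := by group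
  obtain ⟨g, hga, hgb⟩ := h (u⁻¹ * b' * u) (hb.trans (hconj b')) (hprod ▸ hab.trans (hconj _))
  refine ⟨u * g, ?_, ?_⟩
  · rw [mul_assoc u, hga]
    group
  · rw [mul_assoc u, hgb]
    group

section Pair

variable {φ : G →* H} {a b : G}

theorem closure_pair_map_eq_range (hgen : Subgroup.closure {a, b} = ⊤) :
    Subgroup.closure {φ a, φ b} = φ.range := by
  rw [← Set.image_pair, ← MonoidHom.map_closure, hgen, MonoidHom.range_eq_map]

theorem IsRigid.map (hφ : Function.Injective φ) (hrig : IsRigid a b) {a' b' : H}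
    (ha : ∃ g ∈ φ.range, g * φ a * g⁻¹ = a') (hb : ∃ g ∈ φ.range, g * φ b * g⁻¹ = b')
    (hab : ∃ g ∈ φ.range, g * (φ a * φ b)⁻¹ * g⁻¹ = (a' * b')⁻¹) :
    ∃ g ∈ φ.range, g * φ a * g⁻¹ = a' ∧ g * φ b * g⁻¹ = b' := by
  obtain ⟨_, ⟨u, rfl⟩, rfl⟩ := ha
  obtain ⟨_, ⟨v, rfl⟩, rfl⟩ := hb
  obtain ⟨_, ⟨w, rfl⟩, hw⟩ := hab
  have hprod : w * (a * b) * w⁻¹ = u * a * u⁻¹ * (v * b * v⁻¹) := by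
    apply hφ
    simpa only [map_mul, map_inv, mul_inv_rev, inv_inv, mul_assoc] using inv_inj.2 hw
  obtain ⟨g, hga, hgb⟩ := hrig (u * a * u⁻¹) (v * b * v⁻¹) (isConj_iff.2 ⟨u, rfl⟩)
    (isConj_iff.2 ⟨v, rfl⟩) (isConj_iff.2 ⟨w, hprod⟩)
  refine ⟨φ g, ⟨g, rfl⟩, ?_, ?_⟩
  · simpa only [map_mul, map_inv] using congrArg φ hga
  · simpa only [map_mul, map_inv] using congrArg φ hgb

theorem IsRational.map (hφ : Function.Injective φ) (ha : IsRational a) {k : ℤ}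
    (hk : Int.gcd k (orderOf (φ a)) = 1) : ∃ h ∈ φ.range, h * φ a * h⁻¹ = φ a ^ k := by
  rw [orderOf_injective φ hφ] at hk
  obtain ⟨h, hh⟩ := isConj_iff.1 (ha k hk)
  exact ⟨φ h, ⟨h, rfl⟩, by simpa only [map_mul, map_inv, map_zpow] using congrArg φ hh⟩

end Pair

end Group

section Perm

variable {P : Type*} [Group P] {n : ℕ} {φ : P →* Perm (Fin n)}

theorem range_ne_alternatingGroup_and_ne_top (hφ : Function.Injective φ)
    (hcard : 2 * Nat.card P < n.factorial) :
    φ.range ≠ alternatingGroup (Fin n) ∧ φ.range ≠ ⊤ := by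
  have : Finite P := Finite.of_injective φ hφ
  have : Nontrivial (Fin n) := by
    have : 0 < Nat.card P := Nat.card_pos
    exact Fin.nontrivial_iff_two_le.2 (Nat.one_lt_factorial.1 (by omega))
  have hrange : Nat.card φ.range = Nat.card P := Nat.card_congr (φ.ofInjective hφ).symm.toEquiv
  have halt : 2 * Nat.card (alternatingGroup (Fin n)) = n.factorial := by
    rw [two_mul_nat_card_alternatingGroup, Nat.card_perm, Nat.card_fin]
  refine ⟨fun h => ?_, fun h => ?_⟩
  · rw [← hrange, h] at hcard
    omega
  · have : Nat.card φ.range = n.factorial := by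
      rw [h, Subgroup.card_top, Nat.card_perm, Nat.card_fin]
    omega

theorem isNice_of_injective {a b : P} (hφ : Function.Injective φ)
    (hgen : Subgroup.closure {a, b} = ⊤) (hcard : 2 * Nat.card P < n.factorial)
    (halmost : IsAlmostSimple P)
    (hprim : MulAction.IsPreprimitive φ.range (Fin n))
    (hgenus : permInd (φ a) + permInd (φ b) + permInd (φ a * φ b)⁻¹ = 2 * (n - 1))
    (hrigid : IsRigid a b) (ha : IsRational a) (hb : IsRational b) (hab : IsRational (a * b)) :
    IsNice (φ a) (φ b) (φ a * φ b)⁻¹ := by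
  rw [IsNice, closure_pair_map_eq_range hgen]
  refine ⟨mul_inv_cancel _, range_ne_alternatingGroup_and_ne_top hφ hcard,
    ⟨hprim.toIsPretransitive, fun B hB => hprim.isTrivialBlock_of_isBlock hB⟩,
    halmost.of_mulEquiv (φ.ofInjective hφ), hgenus, ?_, ?_⟩
  · rintro a' b' c' habc - ha' hb' hc'
    obtain rfl : c' = (a' * b')⁻¹ := eq_inv_of_mul_eq_one_right habc
    obtain ⟨g, hg, rfl, rfl⟩ := hrigid.map hφ ha' hb' hc'
    exact ⟨g, hg, rfl, rfl, by group⟩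
  · rintro g (rfl | rfl | rfl) k hk
    · exact ha.map hφ hk
    · exact hb.map hφ hk
    · rw [← map_mul, ← map_inv] at hk ⊢
      exact hab.inv.map hφ hk

end Perm

section PermRep

variable {G X α : Type*} [Group G] [MulAction G X]

theorem surjective_of_forall_exists_perm [MulAction.IsPretransitive G X] [Nonempty α] {s : Set G}
    (hs : Subgroup.closure s = ⊤) {e : α → X}
    (h : ∀ g ∈ s, ∃ σ : Perm α, ∀ i, g • e i = e (σ i)) : Function.Surjective e := by
  have hall (g : G) : ∃ σ : Perm α, ∀ i, g • e i = e (σ i) := by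
    induction hs ▸ Subgroup.mem_top g using Subgroup.closure_induction with
    | mem g hg => exact h g hg
    | one => exact ⟨1, fun i => one_smul G (e i)⟩
    | mul g g' _ _ hg hg' =>
      obtain ⟨⟨σ, hσ⟩, σ', hσ'⟩ := hg, hg'
      exact ⟨σ * σ', fun i => by rw [mul_smul, hσ', hσ, Perm.mul_apply]⟩
    | inv g _ hg =>
      obtain ⟨σ, hσ⟩ := hg
      exact ⟨σ⁻¹, fun i => by
        rw [inv_smul_eq_iff, hσ, ← Perm.mul_apply, mul_inv_cancel, Perm.one_apply]⟩
  intro p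
  obtain ⟨i⟩ := ‹Nonempty α›
  obtain ⟨g, rfl⟩ := MulAction.exists_smul_eq G (e i) p
  obtain ⟨σ, hσ⟩ := hall g
  exact ⟨σ i, (hσ i).symm⟩

/-- The action of `G` on `X` as a homomorphism to the permutations of a type `α` identified with
`X`. -/
def permRep (G : Type*) [Group G] [MulAction G X] (e : α ≃ X) : G →* Perm α :=
  e.symm.permCongrHom.toMonoidHom.comp (MulAction.toPermHom G X)

theorem permRep_apply (e : α ≃ X) (g : G) (i : α) : permRep G e g i = e.symm (g • e i) := rfl

theorem permRep_eq {e : α ≃ X} {g : G} {σ : Perm α} (h : ∀ i, g • e i = e (σ i)) :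
    permRep G e g = σ := by
  ext i
  rw [permRep_apply, h, e.symm_apply_apply]

theorem ker_permRep (e : α ≃ X) : (permRep G e).ker = (MulAction.toPermHom G X).ker :=
  MonoidHom.ker_mulEquiv_comp _ e.symm.permCongrHom

theorem isPreprimitive_range_permRep [MulAction.IsPreprimitive G X] (e : α ≃ X) :
    MulAction.IsPreprimitive (permRep G e).range α := by
  let f : X →ₑ[(permRep G e).rangeRestrict] α :=
    { toFun := e.symm
      map_smul' := fun g p => congrArg (fun q => e.symm (g • q)) (e.apply_symm_apply p).symm }
  exact MulAction.IsPreprimitive.of_surjective (f := f) e.symm.surjective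

theorem isPreprimitive_quotient {H : Subgroup G} (hH : IsCoatom H) :
    MulAction.IsPreprimitive G (G ⧸ H) := by
  have : Nontrivial (G ⧸ H) := QuotientGroup.nontrivial_iff.2 hH.1
  rw [← MulAction.isCoatom_stabilizer_iff_preprimitive G ((1 : G) : G ⧸ H),
    MulAction.stabilizer_quotient]
  exact hH

theorem mem_iff_mem_of_mk_eq {H K : Subgroup G} (hHK : H ≤ K) {p q : G}
    (hpq : (p : G ⧸ H) = q) : p ∈ K ↔ q ∈ K := by
  have hmem : p⁻¹ * q ∈ K := hHK (QuotientGroup.eq.1 hpq)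
  rw [← K.mul_mem_cancel_right hmem, mul_inv_cancel_left]

end PermRep

open Matrix
open scoped MatrixGroups

section ProjectiveLinear

open ProjGenLinGroup

variable {F : Type*} [Field F]

/-- The class in `PGL(2, F)` of an invertible matrix. -/
def ofMatrix (A : Matrix (Fin 2) (Fin 2) F) (hA : A.det ≠ 0) : PGL(2, F) :=
  ProjGenLinGroup.mk (GeneralLinearGroup.mkOfDetNeZero A hA)

/-- The class in `PGL(2, F)` of the affine map `t ↦ a * t + b`. -/
def affine (a : Fˣ) (b : F) : PGL(2, F) :=
  ofMatrix !![(a : F), b; 0, 1] (by simp)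

/-- The class in `PGL(2, F)` of the lower unitriangular matrix with corner `c`. -/
def lowerUnipotent (c : F) : PGL(2, F) :=
  ofMatrix !![1, 0; c, 1] (by simp)

theorem exists_ofMatrix (p : PGL(2, F)) : ∃ A hA, p = ofMatrix A hA := by
  obtain ⟨g, rfl⟩ := mk_surjective p
  exact ⟨g, g.det_ne_zero, congrArg _ (Units.ext rfl)⟩

section ofMatrix

variable {A B C : Matrix (Fin 2) (Fin 2) F} {hA : A.det ≠ 0} {hB : B.det ≠ 0} {hC : C.det ≠ 0}

theorem ofMatrix_eq_iff : ofMatrix A hA = ofMatrix B hB ↔ ∃ c : F, c • A = B := by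
  have hscalar (u : Fˣ) : GeneralLinearGroup.mkOfDetNeZero A hA *
      GeneralLinearGroup.scalar (Fin 2) u = GeneralLinearGroup.mkOfDetNeZero B hB ↔
        (u : F) • A = B := by
    rw [← GeneralLinearGroup.scalar_commute, Units.ext_iff, Units.val_mul,
      GeneralLinearGroup.coe_scalar, scalar_apply, ← smul_eq_diagonal_mul]
    rfl
  refine mk_eq_mk_iff.trans ⟨fun ⟨u, hu⟩ => ⟨u, (hscalar u).1 hu⟩, fun ⟨c, hc⟩ => ?_⟩
  have hc0 : c ≠ 0 := by
    rintro rfl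
    exact hB (by simp [← hc])
  exact ⟨Units.mk0 c hc0, (hscalar _).2 hc⟩

theorem ofMatrix_mul :
    ofMatrix A hA * ofMatrix B hB = ofMatrix (A * B) (by simp [hA, hB]) := by
  rw [ofMatrix, ofMatrix, ← map_mul]
  exact congrArg _ (Units.ext rfl)

theorem ofMatrix_mul_eq_mul_iff {D : Matrix (Fin 2) (Fin 2) F} {hD : D.det ≠ 0} :
    ofMatrix A hA * ofMatrix B hB = ofMatrix C hC * ofMatrix D hD ↔
      ∃ c : F, c • (A * B) = C * D := by
  rw [ofMatrix_mul, ofMatrix_mul, ofMatrix_eq_iff]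

theorem ofMatrix_eq_one_iff : ofMatrix A hA = 1 ↔ ∃ c : F, A = c • 1 := by
  have hone : (1 : PGL(2, F)) = ofMatrix 1 (by simp) :=
    mk_one.symm.trans (congrArg _ (Units.ext rfl))
  rw [hone, eq_comm, ofMatrix_eq_iff]
  simp only [eq_comm]

end ofMatrix

theorem affine_mul (a a' : Fˣ) (b b' : F) :
    affine a b * affine a' b' = affine (a * a') (a * b' + b) := by
  rw [affine, affine, ofMatrix_mul]
  exact ofMatrix_eq_iff.2 ⟨1, by simp⟩

theorem affine_one_zero : affine (1 : Fˣ) 0 = 1 :=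
  ofMatrix_eq_one_iff.2 ⟨1, by rw [one_smul, one_fin_two, Units.val_one]⟩

theorem affine_inv (a : Fˣ) (b : F) : (affine a b)⁻¹ = affine a⁻¹ (-(a⁻¹ * b)) := by
  rw [inv_eq_iff_mul_eq_one, affine_mul, mul_inv_cancel, mul_neg, Units.val_inv_eq_inv_val,
    mul_inv_cancel_left₀ a.ne_zero, neg_add_cancel, affine_one_zero]

theorem affine_inv_eq_ofMatrix (a : Fˣ) (b : F) :
    (affine a b)⁻¹ = ofMatrix !![1, -b; 0, (a : F)] (by simp) := by
  rw [inv_eq_iff_mul_eq_one, affine, ofMatrix_mul, ofMatrix_eq_one_iff]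
  exact ⟨a, by simp [one_fin_two, mul_comm]⟩

theorem affine_one_pow (b : F) (m : ℕ) : affine 1 b ^ m = affine 1 (m * b) := by
  induction m with
  | zero => simp [affine_one_zero]
  | succ m ih =>
    rw [pow_succ, ih, affine_mul, mul_one, Units.val_one, one_mul, Nat.cast_succ, add_comm]
    ring_nf

theorem ofMatrix_mem_range_toPGL {A : Matrix (Fin 2) (Fin 2) F} {hA : A.det ≠ 0}
    (hsq : IsSquare A.det) :
    ofMatrix A hA ∈ (ProjectiveSpecialLinearGroup.toPGL (R := F)).range := by
  obtain ⟨r, hr⟩ := hsq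
  have hr0 : r ≠ 0 := by
    rintro rfl
    exact hA (by rw [hr, mul_zero])
  let s : SL(2, F) := ⟨r⁻¹ • A, by rw [det_smul, hr, Fintype.card_fin]; field_simp⟩
  refine ⟨(s : ProjectiveSpecialLinearGroup (Fin 2) F), ?_⟩
  have hs : mk s.toGL = ofMatrix (s : Matrix (Fin 2) (Fin 2) F) (by simp) :=
    congrArg _ (Units.ext rfl)
  rw [ProjectiveSpecialLinearGroup.toPGL_mk, hs, ofMatrix_eq_iff]
  exact ⟨r, smul_inv_smul₀ hr0 A⟩

theorem range_toPGL_le {K : Subgroup PGL(2, F)} (hupper : ∀ c, affine 1 c ∈ K)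
    (hlower : ∀ c, lowerUnipotent c ∈ K) :
    (ProjectiveSpecialLinearGroup.toPGL (n := Fin 2) (R := F)).range ≤ K := by
  rintro _ ⟨s, rfl⟩
  induction s using QuotientGroup.induction_on with | H s =>
  rw [ProjectiveSpecialLinearGroup.toPGL_mk]
  refine SL2.transvection_induction (fun s => mk s.toGL ∈ K) (fun i j hij c => ?_)
    (fun s t hs ht => by simpa only [map_mul] using K.mul_mem hs ht) s
  fin_cases i <;> fin_cases j <;> try exact absurd rfl hij
  · refine (congrArg (· ∈ K) (congrArg _ (Units.ext ?_))).mpr (hupper c)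
    ext i j
    fin_cases i <;> fin_cases j <;> simp [SpecialLinearGroup.transvection_coe]
  · refine (congrArg (· ∈ K) (congrArg _ (Units.ext ?_))).mpr (hlower c)
    ext i j
    fin_cases i <;> fin_cases j <;> simp [SpecialLinearGroup.transvection_coe]

theorem eq_top_of_unipotent_mem {K : Subgroup PGL(2, F)} (hupper : ∀ c, affine 1 c ∈ K)
    (hlower : ∀ c, lowerUnipotent c ∈ K) {D : Matrix (Fin 2) (Fin 2) F} {hD : D.det ≠ 0}
    (hDK : ofMatrix D hD ∈ K) (hdet : ∀ d : F, IsSquare d ∨ IsSquare (D.det * d)) : K = ⊤ := by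
  have hPSL := range_toPGL_le hupper hlower
  refine (Subgroup.eq_top_iff' K).2 fun p => ?_
  obtain ⟨A, hA, rfl⟩ := exists_ofMatrix p
  rcases hdet A.det with h | h
  · exact hPSL (ofMatrix_mem_range_toPGL h)
  · rw [← det_mul] at h
    rw [← K.mul_mem_cancel_left hDK, ofMatrix_mul]
    exact hPSL (ofMatrix_mem_range_toPGL h)

theorem normal_range_toPGL (n R : Type*) [Fintype n] [DecidableEq n] [CommRing R] :
    (ProjectiveSpecialLinearGroup.toPGL (n := n) (R := R)).range.Normal := by
  refine ⟨?_⟩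
  rintro _ ⟨s, rfl⟩ p
  induction s using QuotientGroup.induction_on with | H s =>
  induction p using ProjGenLinGroup.induction_on with | mk g =>
  let t : SpecialLinearGroup n R :=
    ⟨(g * s.toGL * g⁻¹ : GL n R), by
      rw [← GeneralLinearGroup.val_det_apply, map_mul, map_mul, map_inv, mul_right_comm,
        mul_inv_cancel, one_mul, GeneralLinearGroup.val_det_apply]
      exact s.det_coe⟩
  refine ⟨(t : ProjectiveSpecialLinearGroup n R), ?_⟩
  rw [ProjectiveSpecialLinearGroup.toPGL_mk, ProjectiveSpecialLinearGroup.toPGL_mk, ← map_mul,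
    ← map_inv, ← map_mul]
  exact congrArg mk (Units.ext rfl)

theorem isSimpleGroup_range_toPGL (hF : 4 ≤ Nat.card F) :
    IsSimpleGroup (ProjectiveSpecialLinearGroup.toPGL (n := Fin 2) (R := F)).range :=
  (MonoidHom.ofInjective ProjectiveSpecialLinearGroup.toPGL_injective).isSimpleGroup_congr.1
    (ProjectiveSpecialLinearGroup.rank_two_simple hF)

theorem apply_eq_of_commute_affine {A : Matrix (Fin 2) (Fin 2) F} {hA : A.det ≠ 0}
    (hcomm : affine 1 1 * ofMatrix A hA = ofMatrix A hA * affine 1 1) :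
    A 1 0 = 0 ∧ A 0 0 = A 1 1 := by
  obtain ⟨c, hc⟩ := ofMatrix_mul_eq_mul_iff.1 hcomm
  rw [A.eta_fin_two, smul_eq_diagonal_mul] at hc
  simp only [diagonal_fin_two, Units.val_one, mul_fin_two, one_mul, zero_mul, zero_add, add_zero,
    mul_one, mul_zero, EmbeddingLike.apply_eq_iff_eq, vecCons_inj, and_true] at hc
  rw [det_fin_two] at hA
  grind

theorem apply_eq_zero_of_commute_lowerUnipotent {A : Matrix (Fin 2) (Fin 2) F} {hA : A.det ≠ 0}
    (hcomm : lowerUnipotent 1 * ofMatrix A hA = ofMatrix A hA * lowerUnipotent 1) :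
    A 0 1 = 0 := by
  obtain ⟨c, hc⟩ := ofMatrix_mul_eq_mul_iff.1 hcomm
  rw [A.eta_fin_two, smul_eq_diagonal_mul] at hc
  simp only [diagonal_fin_two, mul_fin_two, one_mul, zero_mul, zero_add, add_zero,
    mul_one, mul_zero, EmbeddingLike.apply_eq_iff_eq, vecCons_inj, and_true] at hc
  grind

theorem centralizer_range_toPGL :
    Subgroup.centralizer
      ((ProjectiveSpecialLinearGroup.toPGL (n := Fin 2) (R := F)).range : Set PGL(2, F)) = ⊥ := by
  refine (Subgroup.eq_bot_iff_forall _).2 fun p hp => ?_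
  obtain ⟨A, hA, rfl⟩ := exists_ofMatrix p
  obtain ⟨h10, hdiag⟩ := apply_eq_of_commute_affine
    (hp _ (ofMatrix_mem_range_toPGL (by simp)))
  have h01 := apply_eq_zero_of_commute_lowerUnipotent
    (hp _ (ofMatrix_mem_range_toPGL (by simp)))
  refine ofMatrix_eq_one_iff.2 ⟨A 0 0, ?_⟩
  ext i j
  fin_cases i <;> fin_cases j <;> simp [h10, h01, hdiag]

theorem isAlmostSimple_PGL_two (hF : 4 ≤ Nat.card F) : IsAlmostSimple PGL(2, F) := by
  have hsimple := isSimpleGroup_range_toPGL hF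
  refine ⟨_, normal_range_toPGL (Fin 2) F, hsimple, ?_, centralizer_range_toPGL⟩
  by_contra! hcomm
  obtain ⟨s, hs⟩ :=
    exists_ne (1 : (ProjectiveSpecialLinearGroup.toPGL (n := Fin 2) (R := F)).range)
  have hmem : (s : PGL(2, F)) ∈ Subgroup.centralizer
      ((ProjectiveSpecialLinearGroup.toPGL (n := Fin 2) (R := F)).range : Set PGL(2, F)) :=
    fun t ht => congrArg Subtype.val (hcomm ⟨t, ht⟩ s)
  rw [centralizer_range_toPGL, Subgroup.mem_bot] at hmem
  exact hs (Subtype.ext hmem)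

theorem natCard_PGL_two [Fintype F] :
    Nat.card PGL(2, F) = Fintype.card F * (Fintype.card F ^ 2 - 1) := by
  have hcenter : Nat.card (Subgroup.center (GL (Fin 2) F)) = Fintype.card F - 1 := by
    rw [GeneralLinearGroup.center_eq_range_scalar, ← Nat.card_eq_fintype_card, ← Nat.card_units]
    exact Nat.card_congr (MonoidHom.ofInjective fun u v huv =>
      Units.ext (scalar_inj.1 (congrArg Units.val huv))).symm.toEquiv
  have hquot := Subgroup.card_eq_card_quotient_mul_card_subgroup (Subgroup.center (GL (Fin 2) F))
  rw [hcenter, card_GL_field] at hquot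
  change _ = Nat.card PGL(2, F) * _ at hquot
  have hq : 0 < Fintype.card F - 1 := Nat.sub_pos_of_lt Fintype.one_lt_card
  refine Nat.eq_of_mul_eq_mul_right hq (hquot.symm.trans ?_)
  rw [Fin.prod_univ_two, Fin.val_zero, Fin.val_one, pow_zero, pow_one, sq (Fintype.card F),
    ← Nat.mul_sub_one (Fintype.card F) (Fintype.card F)]
  ring

end ProjectiveLinear

section Conjugacy

variable {F : Type*} [Field F] {A B : Matrix (Fin 2) (Fin 2) F} {hA : A.det ≠ 0} {hB : B.det ≠ 0}

theorem exists_ofMatrix_of_isConj {p : PGL(2, F)} (hp : IsConj (ofMatrix A hA) p) :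
    ∃ B hB, p = ofMatrix B hB ∧ B.trace = A.trace ∧ B.det = A.det := by
  obtain ⟨g, rfl⟩ := isConj_iff.1 hp
  obtain ⟨C, hC, rfl⟩ := exists_ofMatrix g
  have hunit : IsUnit C := C.isUnit_iff_isUnit_det.2 hC.isUnit
  refine ⟨C * A * C⁻¹, (det_conj hunit A).trans_ne hA, ?_, trace_conj hunit A, det_conj hunit A⟩
  rw [mul_inv_eq_iff_eq_mul, ofMatrix_mul, ofMatrix_mul, ofMatrix_eq_iff]
  exact ⟨1, by rw [one_smul, nonsing_inv_mul_cancel_right _ _ hC.isUnit]⟩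

theorem trace_sq_mul_det_eq_of_isConj (h : IsConj (ofMatrix A hA) (ofMatrix B hB)) :
    B.trace ^ 2 * A.det = A.trace ^ 2 * B.det := by
  obtain ⟨C, hC, hBC, htrace, hdet⟩ := exists_ofMatrix_of_isConj h
  obtain ⟨c, rfl⟩ := ofMatrix_eq_iff.1 hBC.symm
  rw [trace_smul, det_smul, htrace, hdet, Fintype.card_fin, smul_eq_mul]
  ring

theorem exists_trace_eq_zero_trace_mul_eq_zero (A : Matrix (Fin 2) (Fin 2) F) :
    ∃ M : Matrix (Fin 2) (Fin 2) F, M.det ≠ 0 ∧ M.trace = 0 ∧ (A * M).trace = 0 := by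
  have htrace (p q r s : F) : (A * !![p, q; r, s]).trace =
      A 0 0 * p + A 0 1 * r + (A 1 0 * q + A 1 1 * s) := by
    simp [trace_fin_two, mul_apply]
  by_cases hc : A 1 0 = 0
  · by_cases hb : A 0 1 = 0
    · exact ⟨!![0, 1; 1, 0], by simp, by simp, by rw [htrace, hb, hc]; ring⟩
    · exact ⟨!![A 0 1, 0; A 1 1 - A 0 0, -A 0 1], by simp [hb], by simp, by rw [htrace]; ring⟩
  · exact ⟨!![A 1 0, A 1 1 - A 0 0; 0, -A 1 0], by simp [hc], by simp, by rw [htrace]; ring⟩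

-- Both `M` and `A * M` have trace zero, hence scalar square, so conjugation by `M` inverts `A`.
theorem mul_mul_eq_smul_of_trace_eq_zero {A M : Matrix (Fin 2) (Fin 2) F} (hM : M.trace = 0)
    (hAM : (A * M).trace = 0) : A * M * A = A.det • M := by
  simp only [trace_fin_two, mul_apply, Fin.sum_univ_two] at hM hAM
  ext i j
  fin_cases i <;> fin_cases j <;> simp [mul_apply, Fin.sum_univ_two, det_fin_two] <;> grind

theorem isConj_inv (p : PGL(2, F)) : IsConj p p⁻¹ := by
  obtain ⟨A, hA, rfl⟩ := exists_ofMatrix p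
  obtain ⟨M, hM, htrace, htrace_mul⟩ := exists_trace_eq_zero_trace_mul_eq_zero A
  refine isConj_iff.2 ⟨ofMatrix M hM, ?_⟩
  rw [mul_inv_eq_iff_eq_mul, eq_inv_mul_iff_mul_eq, ← mul_assoc, ofMatrix_mul,
    ofMatrix_mul, eq_comm, ofMatrix_eq_iff]
  exact ⟨A.det, (mul_mul_eq_smul_of_trace_eq_zero htrace htrace_mul).symm⟩

end Conjugacy

section GeneratingPair

instance fact_prime_eleven : Fact (Nat.Prime 11) := ⟨by norm_num⟩

/-- A matrix of trace `2` and determinant `2` over `𝔽₁₁`, whose class in `PGL(2, 11)` acts as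
`x`. -/
def matX : Matrix (Fin 2) (Fin 2) (ZMod 11) := !![1, 1; -1, 1]

/-- A matrix of trace `0` and determinant `-1` over `𝔽₁₁`, whose class in `PGL(2, 11)` acts as
`y`. -/
def matY : Matrix (Fin 2) (Fin 2) (ZMod 11) := !![-1, 4; 0, 1]

theorem det_matX_ne_zero : matX.det ≠ 0 := by decide

theorem det_matY_ne_zero : matY.det ≠ 0 := by decide

/-- The class of `matX` in `PGL(2, 11)`. -/
def genX : PGL(2, ZMod 11) := ofMatrix matX det_matX_ne_zero

/-- The class of `matY` in `PGL(2, 11)`. -/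
def genY : PGL(2, ZMod 11) := ofMatrix matY det_matY_ne_zero

theorem genX_mul_genX_mul_affine (c : ZMod 11) :
    genX * genX * affine 1 (-c) = lowerUnipotent c * (genX * genX) := by
  rw [genX, affine, lowerUnipotent, ofMatrix_mul, ofMatrix_mul_eq_mul_iff]
  exact ⟨1, by revert c; decide⟩

theorem eq_top_of_genX_mem_of_affine_one_mem {K : Subgroup PGL(2, ZMod 11)} (hX : genX ∈ K)
    {s : ZMod 11} (hs : s ≠ 0) (hsK : affine 1 s ∈ K) : K = ⊤ := by
  have hupper (c : ZMod 11) : affine 1 c ∈ K := by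
    have hpow := K.pow_mem hsK (c / s).val
    rwa [affine_one_pow, ZMod.natCast_zmod_val, div_mul_cancel₀ c hs] at hpow
  have hlower (c : ZMod 11) : lowerUnipotent c ∈ K := by
    have hXX := K.mul_mem hX hX
    rw [← K.mul_mem_cancel_right hXX, ← genX_mul_genX_mul_affine]
    exact K.mul_mem hXX (hupper _)
  exact eq_top_of_unipotent_mem hupper hlower hX (by decide)

theorem closure_genX_genY : Subgroup.closure {genX, genY} = ⊤ := by
  have hX : genX ∈ Subgroup.closure {genX, genY} := Subgroup.subset_closure (by simp)
  have hY : genY ∈ Subgroup.closure {genX, genY} := Subgroup.subset_closure (by simp)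
  have hword : genX ^ 3 * genY * genX ^ 2 * genY * genX ^ 2 * genY * genX * genY = affine 1 6 := by
    simp only [genX, genY, affine, pow_succ, pow_zero, one_mul, ofMatrix_mul, ofMatrix_eq_iff]
    exact ⟨2, by decide +kernel⟩
  refine eq_top_of_genX_mem_of_affine_one_mem hX (s := 6) (by decide) (hword ▸ ?_)
  apply_rules [Subgroup.mul_mem, Subgroup.pow_mem]

-- The matrices `!![s, t; -t, s]` are those commuting with `matX`.
theorem exists_intertwiner_of_trace_mul (p q r : ZMod 11)
    (hdet : (!![p, q; r, -p]).det = matY.det)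
    (htrace : (matX * !![p, q; r, -p]).trace ^ 2 = (matX * matY).trace ^ 2) :
    ∃ s t c : ZMod 11, (!![s, t; -t, s]).det ≠ 0 ∧
      c • (!![s, t; -t, s] * matY) = !![p, q; r, -p] * !![s, t; -t, s] := by
  revert p q r
  decide +kernel

theorem isRigid_genX_genY : IsRigid genX genY := by
  refine isRigid_of_forall_exists_commute fun b' hb hab => ?_
  obtain ⟨B, hB, rfl, htrace, hdet⟩ := exists_ofMatrix_of_isConj hb
  rw [genX, genY, ofMatrix_mul, ofMatrix_mul] at hab
  have htrace_mul := trace_sq_mul_det_eq_of_isConj hab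
  rw [det_mul, det_mul, hdet, mul_left_inj' (mul_ne_zero det_matX_ne_zero det_matY_ne_zero)]
    at htrace_mul
  have hB11 : B 1 1 = -B 0 0 := by
    rw [trace_fin_two, add_comm] at htrace
    exact eq_neg_of_add_eq_zero_left htrace
  have hBeq : B = !![B 0 0, B 0 1; B 1 0, -B 0 0] := hB11 ▸ B.eta_fin_two
  rw [hBeq] at hdet htrace_mul
  obtain ⟨s, t, c, hg, hc⟩ := exists_intertwiner_of_trace_mul _ _ _ hdet htrace_mul
  rw [← hBeq] at hc
  have hcomm : ∀ s t : ZMod 11, !![s, t; -t, s] * matX = matX * !![s, t; -t, s] := by decide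
  exact ⟨ofMatrix !![s, t; -t, s] hg,
    ofMatrix_mul_eq_mul_iff.2 ⟨1, by rw [one_smul, hcomm]⟩, ofMatrix_mul_eq_mul_iff.2 ⟨c, hc⟩⟩

end GeneratingPair

section OctahedralSubgroup

/-- Matrices over `𝔽₁₁` of the three involutions of a Klein four-subgroup of `PSL(2, 11)`. They
have determinant `1`, so the classes of two of them agree only if the matrices agree up to sign. -/
def kleinMat : Fin 3 → Matrix (Fin 2) (Fin 2) (ZMod 11) :=
  ![!![0, 1; -1, 0], !![4, 4; 4, -4], !![4, -4; -4, -4]]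

theorem det_kleinMat : ∀ k, (kleinMat k).det = 1 := by decide

/-- The class of `kleinMat k` in `PGL(2, 11)`. -/
def klein (k : Fin 3) : PGL(2, ZMod 11) :=
  ofMatrix (kleinMat k) ((det_kleinMat k).trans_ne one_ne_zero)

/-- The normalizer of a Klein four-subgroup of `PSL(2, 11)` in `PGL(2, 11)`, a copy of the
symmetric group `S₄`; it is the stabilizer of a point in the action of degree `55`. -/
def octahedral : Subgroup PGL(2, ZMod 11) := Subgroup.normalizer (Set.range klein)

section

variable {A : Matrix (Fin 2) (Fin 2) (ZMod 11)} {hA : A.det ≠ 0}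

theorem conj_klein_eq_klein_iff {k l : Fin 3} :
    ofMatrix A hA * klein k * (ofMatrix A hA)⁻¹ = klein l ↔
      A * kleinMat k = kleinMat l * A ∨ A * kleinMat k = -(kleinMat l * A) := by
  rw [mul_inv_eq_iff_eq_mul, klein, klein, eq_comm, ofMatrix_mul_eq_mul_iff]
  constructor
  · rintro ⟨c, hc⟩
    have hdet := congrArg det hc
    rw [det_smul, det_mul, det_mul, det_kleinMat, det_kleinMat, Fintype.card_fin, one_mul,
      mul_one, mul_eq_right₀ hA, sq_eq_one_iff] at hdet
    rw [← hc]
    exact hdet.imp (fun h => by rw [h, one_smul]) (fun h => by rw [h, neg_one_smul])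
  · rintro (h | h)
    · exact ⟨1, by rw [one_smul, h]⟩
    · exact ⟨-1, by rw [neg_one_smul, h]⟩

theorem ofMatrix_mem_octahedral_iff : ofMatrix A hA ∈ octahedral ↔
    ∀ k, ∃ l, A * kleinMat k = kleinMat l * A ∨ A * kleinMat k = -(kleinMat l * A) := by
  simp only [← conj_klein_eq_klein_iff (hA := hA)]
  constructor
  · intro h k
    obtain ⟨l, hl⟩ := (Subgroup.mem_set_normalizer_iff.1 h (klein k)).1 ⟨k, rfl⟩
    exact ⟨l, hl.symm⟩
  · intro h
    refine Subgroup.mem_normalizer_fintype ?_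
    rintro _ ⟨k, rfl⟩
    exact (h k).imp fun _ hl => hl.symm

end

theorem genX_mem_octahedral : genX ∈ octahedral :=
  ofMatrix_mem_octahedral_iff.2 (by decide +kernel)

theorem eq_one_and_eq_zero_of_affine_mem_octahedral {a : (ZMod 11)ˣ} {b : ZMod 11}
    (ha : IsSquare (a : ZMod 11)) (h : affine a b ∈ octahedral) : a = 1 ∧ b = 0 := by
  have key : ∀ a b : ZMod 11, IsSquare a → a ≠ 0 → (∀ k, ∃ l,
      !![a, b; 0, 1] * kleinMat k = kleinMat l * !![a, b; 0, 1] ∨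
        !![a, b; 0, 1] * kleinMat k = -(kleinMat l * !![a, b; 0, 1])) → a = 1 ∧ b = 0 := by
    decide +kernel
  rw [← Units.val_eq_one]
  exact key a b ha a.ne_zero (ofMatrix_mem_octahedral_iff.1 h)

end OctahedralSubgroup

section Cosets

/-- Slope and intercept of the affine map carrying the base point `1` to the point `i`. The affine
maps with square slope form a complement of `octahedral`, so they label its cosets.
The point `55` is `(0 : Fin 55)` and comes first. -/
def label : Fin 55 → ZMod 11 × ZMod 11 :=
  ![
    (3, 3), (1, 0), (9, 9), (1, 7), (4, 5), (5, 9), (9, 1), (4, 2), (3, 8), (3, 10), (1, 5),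
    (1, 3), (4, 0), (3, 2), (5, 3), (5, 7), (9, 8), (9, 4), (3, 9), (1, 6), (5, 2), (5, 0),
    (1, 4), (1, 1), (4, 4), (4, 3), (4, 6), (1, 10), (5, 5), (9, 10), (1, 2), (3, 0), (1, 9),
    (9, 7), (9, 6), (9, 0), (9, 2), (3, 6), (3, 4), (4, 10), (5, 4), (1, 8), (3, 7), (4, 7),
    (5, 1), (9, 5), (4, 1), (4, 9), (5, 10), (5, 8), (5, 6), (3, 1), (9, 3), (4, 8), (3, 5)]

theorem label_injective : Function.Injective label := by decide +kernel

theorem isSquare_label_fst : ∀ i, IsSquare (label i).1 := by decide +kernel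

theorem label_fst_ne_zero : ∀ i, (label i).1 ≠ 0 := by decide +kernel

/-- The representative of the coset of `octahedral` which is identified with the point `i`. -/
def cosetRep (i : Fin 55) : PGL(2, ZMod 11) :=
  affine (Units.mk0 (label i).1 (label_fst_ne_zero i)) (label i).2

theorem mk_cosetRep_injective :
    Function.Injective fun i => (cosetRep i : PGL(2, ZMod 11) ⧸ octahedral) := by
  intro i j hij
  have hmem := QuotientGroup.eq.1 hij
  rw [cosetRep, cosetRep, affine_inv, affine_mul] at hmem
  have hsq : IsSquare ((label i).1⁻¹ * (label j).1) :=
    (isSquare_label_fst i).inv.mul (isSquare_label_fst j)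
  obtain ⟨hslope, hintercept⟩ :=
    eq_one_and_eq_zero_of_affine_mem_octahedral (by simpa using hsq) hmem
  rw [inv_mul_eq_one, Units.mk0_inj] at hslope
  rw [← sub_eq_add_neg, sub_eq_zero] at hintercept
  exact label_injective (Prod.ext hslope (mul_left_cancel₀ (Units.ne_zero _) hintercept).symm)

theorem genX_smul_mk_cosetRep (i : Fin 55) :
    genX • (cosetRep i : PGL(2, ZMod 11) ⧸ octahedral) = cosetRep (x i) := by
  refine (QuotientGroup.eq.2 ?_ : (cosetRep (x i) : PGL(2, ZMod 11) ⧸ octahedral) =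
    (genX * cosetRep i : PGL(2, ZMod 11))).symm
  rw [cosetRep, affine_inv_eq_ofMatrix, cosetRep, affine, genX, ofMatrix_mul, ofMatrix_mul,
    ofMatrix_mem_octahedral_iff]
  revert i
  decide +kernel

theorem genY_smul_mk_cosetRep (i : Fin 55) :
    genY • (cosetRep i : PGL(2, ZMod 11) ⧸ octahedral) = cosetRep (y i) := by
  refine (QuotientGroup.eq.2 ?_ : (cosetRep (y i) : PGL(2, ZMod 11) ⧸ octahedral) =
    (genY * cosetRep i : PGL(2, ZMod 11))).symm
  rw [cosetRep, affine_inv_eq_ofMatrix, cosetRep, affine, genY, ofMatrix_mul, ofMatrix_mul,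
    ofMatrix_mem_octahedral_iff]
  revert i
  decide +kernel

end Cosets

section Primitivity

theorem mk_cosetRep_surjective :
    Function.Surjective fun i => (cosetRep i : PGL(2, ZMod 11) ⧸ octahedral) := by
  refine surjective_of_forall_exists_perm closure_genX_genY ?_
  rintro _ (rfl | rfl)
  · exact ⟨x, genX_smul_mk_cosetRep⟩
  · exact ⟨y, genY_smul_mk_cosetRep⟩

theorem cosetRep_one : cosetRep 1 = 1 := by
  rw [← affine_one_zero, cosetRep]
  congr 1
  exact Units.ext rfl

theorem eq_top_of_affine_mem {K : Subgroup PGL(2, ZMod 11)} (hX : genX ∈ K) {a a' : (ZMod 11)ˣ}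
    {b b' : ZMod 11} (h : affine a b ∈ K) (h' : affine a' b' ∈ K)
    (hne : a * b' + b ≠ a' * b + b') : K = ⊤ := by
  have hcomm : affine 1 (a * b' + b - (a' * b + b')) * (affine a' b' * affine a b) =
      affine a b * affine a' b' := by
    simp only [affine_mul, mul_comm a' a, one_mul, Units.val_one, add_sub_cancel]
  refine eq_top_of_genX_mem_of_affine_one_mem hX (sub_ne_zero.2 hne) ?_
  rw [← K.mul_mem_cancel_right (K.mul_mem h' h), hcomm]
  exact K.mul_mem h h'

theorem exists_sq_or_self_not_commute (i : Fin 55) (hi : i ≠ 1) : ∃ j,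
    (label j = label i ∨ label j = ((label i).1 ^ 2, (label i).1 * (label i).2 + (label i).2)) ∧
      (label i).1 * (label (x j)).2 + (label i).2 ≠
        (label (x j)).1 * (label i).2 + (label (x j)).2 := by
  revert i
  decide +kernel

theorem eq_top_of_cosetRep_mem {K : Subgroup PGL(2, ZMod 11)} (hK : octahedral ≤ K) {i : Fin 55}
    (hi : i ≠ 1) (hiK : cosetRep i ∈ K) : K = ⊤ := by
  have hX : genX ∈ K := hK genX_mem_octahedral
  obtain ⟨j, hj, hne⟩ := exists_sq_or_self_not_commute i hi
  have hjK : cosetRep j ∈ K := by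
    rcases hj with hj | hj
    · rwa [label_injective hj]
    · have : cosetRep j = cosetRep i * cosetRep i := by
        rw [cosetRep, cosetRep, affine_mul]
        congr 1
        · exact Units.ext (by simp [hj, sq])
        · simp [hj]
      rw [this]
      exact K.mul_mem hiK hiK
  have hxjK : cosetRep (x j) ∈ K :=
    (mem_iff_mem_of_mk_eq hK (genX_smul_mk_cosetRep j)).1 (K.mul_mem hX hjK)
  exact eq_top_of_affine_mem hX hiK hxjK (by simpa only [Units.val_mk0] using hne)

theorem isCoatom_octahedral : IsCoatom octahedral := by
  refine ⟨fun htop => ?_, fun K hK => ?_⟩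
  · have h01 : (0 : Fin 55) = 1 :=
      mk_cosetRep_injective (QuotientGroup.eq.2 (htop ▸ Subgroup.mem_top _))
    exact zero_ne_one h01
  · obtain ⟨p, hpK, hp⟩ := SetLike.exists_of_lt hK
    obtain ⟨i, hi⟩ := mk_cosetRep_surjective p
    have hi1 : i ≠ 1 := by
      rintro rfl
      rw [mem_iff_mem_of_mk_eq le_rfl hi.symm, cosetRep_one] at hp
      exact hp octahedral.one_mem
    exact eq_top_of_cosetRep_mem hK.le hi1 ((mem_iff_mem_of_mk_eq hK.le hi).2 hpK)

end Primitivity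

section CycleTypes

theorem cycleType_permOfCycles {n : ℕ} {cs : List (List (Fin n))} (hnodup : cs.flatten.Nodup)
    (hlength : ∀ c ∈ cs, 2 ≤ c.length) :
    (permOfCycles cs).cycleType = (cs.map List.length : List ℕ) := by
  obtain ⟨hnodup, hdisj⟩ := List.nodup_flatten.1 hnodup
  rw [permOfCycles, Perm.cycleType_eq (cs.map List.formPerm) rfl, List.map_map]
  · refine congrArg _ (List.map_congr_left fun c hc => ?_)
    have hne (i : Fin n) : c ≠ [i] := by
      rintro rfl
      exact absurd (hlength _ hc) (by simp)
    rw [Function.comp_apply, Function.comp_apply,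
      List.support_formPerm_of_nodup c (hnodup c hc) hne, List.toFinset_card_of_nodup (hnodup c hc)]
  · intro σ hσ
    obtain ⟨c, hc, rfl⟩ := List.mem_map.1 hσ
    exact List.isCycle_formPerm (hnodup c hc) (hlength c hc)
  · refine List.pairwise_map.2 (hdisj.imp_of_mem fun {c d} hc hd hcd => ?_)
    exact (List.formPerm_disjoint_iff (hnodup c hc) (hnodup d hd) (hlength c hc)
      (hlength d hd)).2 hcd

theorem cycleType_x : x.cycleType = Multiset.replicate 13 4 :=
  cycleType_permOfCycles (by decide +kernel) (by decide +kernel)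

theorem cycleType_y : y.cycleType = Multiset.replicate 25 2 :=
  cycleType_permOfCycles (by decide +kernel) (by decide +kernel)

theorem inv_x_mul_y_eq : (x * y)⁻¹ = permOfCycles [[1, 22, 36, 18, 33, 8], [2, 41, 28, 45, 24, 12],
    [3, 51, 19, 40, 6, 5], [4, 26, 31, 29, 11, 20], [7, 47, 16, 49, 10, 17],
    [13, 43, 53, 21, 27, 52], [14, 48, 25, 37, 42, 39], [30, 54, 34, 38, 35, 32],
    [15, 46, 50], [55, 9], [23, 44]] := by
  refine inv_eq_of_mul_eq_one_right (Equiv.ext ?_)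
  decide +kernel

theorem cycleType_inv_x_mul_y : ((x * y)⁻¹).cycleType =
    Multiset.replicate 8 6 + Multiset.replicate 1 3 + Multiset.replicate 2 2 := by
  rw [inv_x_mul_y_eq]
  exact cycleType_permOfCycles (by decide +kernel) (by decide +kernel)

theorem permInd_add_permInd_add_permInd :
    permInd x + permInd y + permInd (x * y)⁻¹ = 2 * (55 - 1) := by
  rw [permInd, permInd, permInd, cycleType_x, cycleType_y, cycleType_inv_x_mul_y]
  decide

end CycleTypes

section DegreeFiftyFive

/-- The points `1, …, 55` as cosets of `octahedral`. -/
noncomputable def cosetEquiv : Fin 55 ≃ PGL(2, ZMod 11) ⧸ octahedral :=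
  Equiv.ofBijective _ ⟨mk_cosetRep_injective, mk_cosetRep_surjective⟩

/-- The action of `PGL(2, 11)` on the cosets of `octahedral`, as permutations of `Fin 55`. -/
noncomputable def cosetHom : PGL(2, ZMod 11) →* Perm (Fin 55) :=
  permRep PGL(2, ZMod 11) cosetEquiv

theorem cosetHom_genX : cosetHom genX = x := permRep_eq genX_smul_mk_cosetRep

theorem cosetHom_genY : cosetHom genY = y := permRep_eq genY_smul_mk_cosetRep

theorem ker_cosetHom_le : cosetHom.ker ≤ octahedral := by
  rw [cosetHom, ker_permRep, ← Subgroup.normalCore_eq_ker]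
  exact octahedral.normalCore_le

theorem cosetHom_injective : Function.Injective cosetHom := by
  have := normal_range_toPGL (Fin 2) (ZMod 11)
  have := isSimpleGroup_range_toPGL (F := ZMod 11) (by simp)
  refine injective_of_not_le_ker centralizer_range_toPGL fun hle => ?_
  have hmem : affine (1 : (ZMod 11)ˣ) 1 ∈ octahedral :=
    ker_cosetHom_le (hle (ofMatrix_mem_range_toPGL (by simp)))
  exact one_ne_zero (eq_one_and_eq_zero_of_affine_mem_octahedral (by simp) hmem).2

theorem isPreprimitive_range_cosetHom :
    MulAction.IsPreprimitive cosetHom.range (Fin 55) := by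
  have := isPreprimitive_quotient isCoatom_octahedral
  exact isPreprimitive_range_permRep cosetEquiv

theorem isRational_of_orderOf_cosetHom {p : PGL(2, ZMod 11)} {m : ℕ}
    (hp : orderOf (cosetHom p) = m) (hm : ∀ u : (ZMod m)ˣ, u = 1 ∨ u = -1) : IsRational p := by
  rw [orderOf_injective cosetHom cosetHom_injective] at hp
  subst hp
  exact isRational_of_isConj_inv hm (isConj_inv p)

theorem isRational_genX : IsRational genX := by
  refine isRational_of_orderOf_cosetHom (m := 4) ?_ (by decide)
  rw [cosetHom_genX, ← Perm.lcm_cycleType, cycleType_x]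
  decide +kernel

theorem isRational_genY : IsRational genY := by
  refine isRational_of_orderOf_cosetHom (m := 2) ?_ (by decide)
  rw [cosetHom_genY, ← Perm.lcm_cycleType, cycleType_y]
  decide +kernel

theorem isRational_genX_mul_genY : IsRational (genX * genY) := by
  refine isRational_of_orderOf_cosetHom (m := 6) ?_ (by decide)
  rw [map_mul, cosetHom_genX, cosetHom_genY, ← orderOf_inv, ← Perm.lcm_cycleType,
    cycleType_inv_x_mul_y]
  decide +kernel

theorem natCard_PGL_two_eleven : Nat.card PGL(2, ZMod 11) = 1320 := by
  rw [natCard_PGL_two, ZMod.card]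
  norm_num

theorem natCard_closure_x_y : Nat.card (Subgroup.closure {x, y}) = 1320 := by
  rw [← cosetHom_genX, ← cosetHom_genY, closure_pair_map_eq_range closure_genX_genY,
    ← natCard_PGL_two_eleven]
  exact Nat.card_congr (cosetHom.ofInjective cosetHom_injective).symm.toEquiv

theorem isNice_x_y : IsNice x y (x * y)⁻¹ := by
  have hgenus := permInd_add_permInd_add_permInd
  rw [← cosetHom_genX, ← cosetHom_genY] at hgenus ⊢
  exact isNice_of_injective cosetHom_injective closure_genX_genY
    (by rw [natCard_PGL_two_eleven]; decide +kernel) (isAlmostSimple_PGL_two (by simp))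
    isPreprimitive_range_cosetHom hgenus isRigid_genX_genY isRational_genX isRational_genY
    isRational_genX_mul_genY

end DegreeFiftyFive

end NiceTriple

theorem nice_triple_deg55_stmt4 :
    IsNice x y (x * y)⁻¹ ∧
    x.cycleType = Multiset.replicate 13 4 ∧
    y.cycleType = Multiset.replicate 25 2 ∧
    ((x * y)⁻¹).cycleType = Multiset.replicate 8 6 + Multiset.replicate 1 3 + Multiset.replicate 2 2 ∧
    Nat.card ↥(Subgroup.closure {x, y} : Subgroup (Equiv.Perm (Fin 55))) = 1320 :=
  ⟨NiceTriple.isNice_x_y, NiceTriple.cycleType_x, NiceTriple.cycleType_y,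
    NiceTriple.cycleType_inv_x_mul_y, NiceTriple.natCard_closure_x_y⟩
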